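/- In the two-dimensional non-radial setting, assume 1 < p < 1 + 4α₁′α₂′/(α₁′+α₂′). Then ν₀ = 0, and for every ν > 0 one has I_ν < 0 and there exists q ∈ ℓ²(Z²) with M[q] = ν and H[q] = I_ν. -/

import Mathlib

open scoped BigOperators ENNReal
open Filter Topology

noncomputable section

/-- `J^{(i)}` is of order `α ∈ (0,∞]` (one-dimensional coupling): for finite `α`,
`k^{1+α} J_k` tends to a finite positive limit; for `α = ∞`, `k^{1+β} J_k → 0` for
every `β > 0`. -/
def JOrder1 (J : ℕ → ℝ) (α : ℝ≥0∞) : Prop :=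
  if α = ⊤ then
    ∀ β : ℝ, 0 < β → Tendsto (fun k : ℕ => (k : ℝ) ^ ((1 : ℝ) + β) * J k) atTop (𝓝 0)
  else
    ∃ A : ℝ, 0 < A ∧ Tendsto (fun k : ℕ => (k : ℝ) ^ ((1 : ℝ) + α.toReal) * J k) atTop (𝓝 A)

/-- `α′ = α/2` for `α ∈ (0,2)` and `α′ = 1` for `α ∈ [2,∞]`. -/
def alphaPrime (α : ℝ≥0∞) : ℝ := if α < 2 then α.toReal / 2 else 1

/-- The quadratic form of the two-dimensional non-radial operator:
`⟨Lu,u⟩ = (1/2) Σ_m Σ_{n ≠ n'} J⁽¹⁾_{|n-n'|} |u_{n,m} - u_{n',m}|²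
        + (1/2) Σ_n Σ_{m ≠ m'} J⁽²⁾_{|m-m'|} |u_{n,m} - u_{n,m'}|²`. -/
def pairing2 (J1 J2 : ℕ → ℝ) (u : ℤ × ℤ → ℂ) : ℝ :=
  (1/2) * (∑' m : ℤ, ∑' n : ℤ, ∑' n' : ℤ,
      if n' = n then 0 else J1 (n - n').natAbs * ‖u (n, m) - u (n', m)‖ ^ 2) +
  (1/2) * (∑' n : ℤ, ∑' m : ℤ, ∑' m' : ℤ,
      if m' = m then 0 else J2 (m - m').natAbs * ‖u (n, m) - u (n, m')‖ ^ 2)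

/-- The mass `M[u] = Σ |u|²` on `ℤ²`. -/
def mass2 (u : ℤ × ℤ → ℂ) : ℝ := ∑' z : ℤ × ℤ, ‖u z‖ ^ 2

/-- Membership in `ℓ²(ℤ²)`. -/
def MemL2two (u : ℤ × ℤ → ℂ) : Prop := Summable fun z : ℤ × ℤ => ‖u z‖ ^ 2

/-- The potential term `Σ |u|^{p+1}` on `ℤ²`. -/
def ppot2 (p : ℝ) (u : ℤ × ℤ → ℂ) : ℝ := ∑' z : ℤ × ℤ, ‖u z‖ ^ (p + 1)

/-- The energy `H[u] = (1/2)⟨Lu,u⟩ - (1/(p+1)) Σ |u|^{p+1}` on `ℤ²`. -/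
def energy2 (J1 J2 : ℕ → ℝ) (p : ℝ) (u : ℤ × ℤ → ℂ) : ℝ :=
  (1/2) * pairing2 J1 J2 u - (1/(p+1)) * ppot2 p u

/-- `I_ν = inf {H[q] : q ∈ ℓ²(ℤ²), M[q] = ν}`. -/
def Ifun2 (J1 J2 : ℕ → ℝ) (p ν : ℝ) : ℝ :=
  sInf {x : ℝ | ∃ q, MemL2two q ∧ mass2 q = ν ∧ energy2 J1 J2 p q = x}

/-- The Gagliardo–Nirenberg-type inequality at mass level `ν` on `ℤ²`. -/
def GNineq2 (J1 J2 : ℕ → ℝ) (p ν : ℝ) : Prop :=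
  ∀ q : ℤ × ℤ → ℂ, MemL2two q →
    ppot2 p q ≤ ((p + 1) / 2) * ν ^ (-(p - 1) / 2) * (mass2 q) ^ ((p - 1) / 2) *
      pairing2 J1 J2 q

/-- The excitation threshold `ν₀` on `ℤ²`, with `ν₀ = 0` if the GN inequality fails
for every positive mass level. -/
def nuZero2 (J1 J2 : ℕ → ℝ) (p : ℝ) : ℝ :=
  sSup (insert 0 {ν : ℝ | 0 < ν ∧ GNineq2 J1 J2 p ν})

/-!
Existence. The energy is invariant under translations, so a minimizing sequence can be translated
to stay away from `0` at the origin, and along an ultrafilter it converges pointwise to some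
`q ≠ 0`. By the Brezis–Lieb lemma mass and energy split asymptotically between `q` and the
remainder. Scaling gives `(m / ν) I_ν ≤ H[u]` for states `u` of mass `m ≤ ν`, strictly if `m < ν`
and `u ≠ 0`; applied to `q` and to the remainder, it forces `q` to carry the whole mass as soon as
`I_ν < 0`.

Negativity. A state violating the Gagliardo–Nirenberg inequality at level `ν` has negative energy
once rescaled to mass `ν`. Tent functions on boxes of sides `R ^ (1 / γ₁)` and `R ^ (1 / γ₂)` have
mass and potential of order `R ^ (1 / γ₁ + 1 / γ₂)`, while their quadratic form is smaller by a
factor `R⁻²` when the jump rates have finite moments of orders `2 γᵢ ≤ 2`. They violate the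
inequality at every level for large `R` if `(1 / γ₁ + 1 / γ₂) (p - 1) / 2 < 2`, and a coupling of
order `α` has these moments for all `γ < α′`.
-/

section PowerInequalities

variable {E : Type*} [SeminormedAddCommGroup E] {s ε : ℝ}

lemma add_rpow_le_weighted (hs : 1 ≤ s) {t a b : ℝ} (ht : 0 < t) (ht' : t < 1)
    (ha : 0 ≤ a) (hb : 0 ≤ b) :
    (a + b) ^ s ≤ t ^ (1 - s) * a ^ s + (1 - t) ^ (1 - s) * b ^ s := by
  have weight_mul_rpow : ∀ {τ c : ℝ}, 0 < τ → 0 ≤ c → τ * (c / τ) ^ s = τ ^ (1 - s) * c ^ s := by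
    intro τ c hτ hc
    rw [Real.div_rpow hc hτ.le, Real.rpow_sub hτ, Real.rpow_one]
    ring
  have ht₁ : 0 < 1 - t := sub_pos.2 ht'
  have hconv := (convexOn_rpow hs).2 (Set.mem_Ici.2 (div_nonneg ha ht.le))
    (Set.mem_Ici.2 (div_nonneg hb ht₁.le)) ht.le ht₁.le (by ring)
  simp only [smul_eq_mul, mul_div_cancel₀ _ ht.ne', mul_div_cancel₀ _ ht₁.ne'] at hconv
  rwa [weight_mul_rpow ht ha, weight_mul_rpow ht₁ hb] at hconv

lemma exists_add_rpow_le (hs : 1 ≤ s) (hε : 0 < ε) :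
    ∃ C : ℝ, 0 ≤ C ∧ ∀ a b : ℝ, 0 ≤ a → 0 ≤ b → (a + b) ^ s ≤ (1 + ε) * a ^ s + C * b ^ s := by
  have hlim : Tendsto (fun t : ℝ => t ^ (1 - s)) (𝓝[<] 1) (𝓝 1) := by
    simpa using (Real.continuousAt_rpow_const 1 (1 - s) (Or.inl one_ne_zero)).tendsto.mono_left
      nhdsWithin_le_nhds
  obtain ⟨t, htε, ht, ht'⟩ := ((hlim.eventually (gt_mem_nhds (lt_add_of_pos_right 1 hε))).and
    (Ioo_mem_nhdsLT zero_lt_one)).exists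
  refine ⟨(1 - t) ^ (1 - s), Real.rpow_nonneg (sub_pos.2 ht').le _, fun a b ha hb => ?_⟩
  refine (add_rpow_le_weighted hs ht ht' ha hb).trans ?_
  gcongr

lemma exists_abs_rpow_norm_add_sub_le (hs : 1 ≤ s) (hε : 0 < ε) :
    ∃ C : ℝ, 0 ≤ C ∧ ∀ x y : E, |‖x + y‖ ^ s - ‖x‖ ^ s| ≤ ε * ‖x‖ ^ s + C * ‖y‖ ^ s := by
  have hs₀ : 0 ≤ s := zero_le_one.trans hs
  obtain ⟨C, hC, hadd⟩ := exists_add_rpow_le hs hε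
  have rpow_le : ∀ {z x y : E}, ‖z‖ ≤ ‖x‖ + ‖y‖ → ‖z‖ ^ s ≤ (1 + ε) * ‖x‖ ^ s + C * ‖y‖ ^ s :=
    fun h => (Real.rpow_le_rpow (norm_nonneg _) h hs₀).trans
      (hadd _ _ (norm_nonneg _) (norm_nonneg _))
  refine ⟨C, hC, fun x y => abs_sub_le_iff.2 ⟨?_, ?_⟩⟩
  · linarith [rpow_le (norm_add_le x y)]
  · have hx : ‖x‖ ≤ ‖x + y‖ + ‖y‖ := by simpa using norm_sub_le (x + y) y
    rcases le_total ‖x‖ ‖x + y‖ with h | h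
    · have : ‖x‖ ^ s ≤ ‖x + y‖ ^ s := by gcongr
      have : 0 ≤ ε * ‖x‖ ^ s + C * ‖y‖ ^ s := by positivity
      linarith
    · have : ε * ‖x + y‖ ^ s ≤ ε * ‖x‖ ^ s := by gcongr
      linarith [rpow_le hx]

lemma rpow_norm_sub_le (hs : 1 ≤ s) (x y : E) :
    ‖x - y‖ ^ s ≤ 2 ^ (s - 1) * (‖x‖ ^ s + ‖y‖ ^ s) := by
  have hhalf : (1 / 2 : ℝ) ^ (1 - s) = 2 ^ (s - 1) := by
    rw [one_div, Real.inv_rpow two_pos.le, ← Real.rpow_neg two_pos.le, neg_sub]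
  calc ‖x - y‖ ^ s ≤ (‖x‖ + ‖y‖) ^ s := by gcongr; exact norm_sub_le x y
    _ ≤ (1 / 2) ^ (1 - s) * ‖x‖ ^ s + (1 - 1 / 2) ^ (1 - s) * ‖y‖ ^ s :=
      add_rpow_le_weighted hs one_half_pos one_half_lt_one (norm_nonneg x) (norm_nonneg y)
    _ = 2 ^ (s - 1) * (‖x‖ ^ s + ‖y‖ ^ s) := by rw [sub_half, hhalf, mul_add]

lemma rpow_le_mul_rpow_of_le {r t K : ℝ} (hsr : s ≤ r) (hr : r ≠ 0) (ht : 0 ≤ t) (hK : t ≤ K) :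
    t ^ r ≤ K ^ (r - s) * t ^ s := by
  rcases ht.eq_or_lt with rfl | ht
  · rw [Real.zero_rpow hr]
    positivity
  · calc t ^ r = t ^ (r - s) * t ^ s := by rw [← Real.rpow_add ht, sub_add_cancel]
      _ ≤ K ^ (r - s) * t ^ s := by gcongr

end PowerInequalities

section PowSum

variable {ι ι' E : Type*} [SeminormedAddCommGroup E] {s r : ℝ} {u v : ι → E}

/-- Membership in `ℓˢ`, for a real exponent `s`. -/
def PowSummable (s : ℝ) (u : ι → E) : Prop := Summable fun i => ‖u i‖ ^ s

/-- The sum `∑ ‖u‖ ^ s`: the mass of `u` for `s = 2`, its potential term for `s = p + 1`. -/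
def powSum (s : ℝ) (u : ι → E) : ℝ := ∑' i, ‖u i‖ ^ s

lemma powSum_nonneg (s : ℝ) (u : ι → E) : 0 ≤ powSum s u := tsum_nonneg fun _ => by positivity

lemma PowSummable.rpow_norm_le (hu : PowSummable s u) (i : ι) : ‖u i‖ ^ s ≤ powSum s u :=
  hu.le_tsum i fun _ _ => by positivity

lemma PowSummable.norm_le (hs : 0 < s) (hu : PowSummable s u) (i : ι) :
    ‖u i‖ ≤ powSum s u ^ (1 / s) := by
  rw [one_div]
  exact (Real.le_rpow_inv_iff_of_pos (norm_nonneg _) (powSum_nonneg s u) hs).2 (hu.rpow_norm_le i)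

lemma PowSummable.powSum_pos (hu : PowSummable s u) {i : ι} (hi : 0 < ‖u i‖) :
    0 < powSum s u :=
  (Real.rpow_pos_of_pos hi s).trans_le (hu.rpow_norm_le i)

lemma PowSummable.of_le (hs : 0 < s) (hsr : s ≤ r) (hu : PowSummable s u) : PowSummable r u :=
  Summable.of_nonneg_of_le (fun _ => by positivity)
    (fun i => rpow_le_mul_rpow_of_le hsr (hs.trans_le hsr).ne' (norm_nonneg _) (hu.norm_le hs i))
    (hu.mul_left _)

lemma PowSummable.powSum_le_mul (hs : 0 < s) (hsr : s ≤ r) (hu : PowSummable s u) {K : ℝ}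
    (hK : ∀ i, ‖u i‖ ≤ K) : powSum r u ≤ K ^ (r - s) * powSum s u := by
  rw [powSum, powSum, ← tsum_mul_left]
  exact (hu.of_le hs hsr).tsum_le_tsum
    (fun i => rpow_le_mul_rpow_of_le hsr (hs.trans_le hsr).ne' (norm_nonneg _) (hK i))
    (hu.mul_left _)

lemma PowSummable.powSum_pos_of_powSum_pos (hs : 0 < s) (hsr : s ≤ r) (hu : PowSummable s u)
    (hr : 0 < powSum r u) : 0 < powSum s u := by
  refine (powSum_nonneg s u).lt_of_ne' fun hu₀ => hr.not_ge ?_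
  simpa only [hu₀, mul_zero] using hu.powSum_le_mul hs hsr (hu.norm_le hs)

lemma PowSummable.sub (hs : 1 ≤ s) (hu : PowSummable s u) (hv : PowSummable s v) :
    PowSummable s (u - v) :=
  Summable.of_nonneg_of_le (fun _ => by positivity) (fun i => rpow_norm_sub_le hs (u i) (v i))
    ((Summable.add hu hv).mul_left _)

lemma PowSummable.powSum_sub_le (hs : 1 ≤ s) (hu : PowSummable s u) (hv : PowSummable s v) :
    powSum s (u - v) ≤ 2 ^ (s - 1) * (powSum s u + powSum s v) := by
  rw [powSum, powSum, powSum, ← Summable.tsum_add hu hv, ← tsum_mul_left]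
  exact Summable.tsum_le_tsum (fun i => rpow_norm_sub_le hs (u i) (v i)) (hu.sub hs hv)
    ((Summable.add hu hv).mul_left _)

lemma powSummable_comp_equiv (e : ι' ≃ ι) : PowSummable s (u ∘ e) ↔ PowSummable s u :=
  e.summable_iff (f := fun i => ‖u i‖ ^ s)

lemma powSum_comp_equiv (s : ℝ) (u : ι → E) (e : ι' ≃ ι) : powSum s (u ∘ e) = powSum s u :=
  e.tsum_eq fun i => ‖u i‖ ^ s

lemma rpow_norm_smul [NormedSpace ℝ E] (s c : ℝ) (x : E) :
    ‖c • x‖ ^ s = |c| ^ s * ‖x‖ ^ s := by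
  rw [norm_smul, Real.norm_eq_abs, Real.mul_rpow (abs_nonneg c) (norm_nonneg x)]

lemma PowSummable.smul [NormedSpace ℝ E] (c : ℝ) (hu : PowSummable s u) :
    PowSummable s (c • u) :=
  (hu.mul_left (|c| ^ s)).congr fun i => (rpow_norm_smul s c (u i)).symm

lemma powSum_smul [NormedSpace ℝ E] (s c : ℝ) (u : ι → E) :
    powSum s (c • u) = |c| ^ s * powSum s u := by
  simp only [powSum, Pi.smul_apply, rpow_norm_smul, tsum_mul_left]

section FiniteSupport

variable {S : Finset ι}

lemma powSummable_of_support_subset (hs : s ≠ 0) (hS : ∀ i ∉ S, u i = 0) : PowSummable s u :=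
  summable_of_ne_finset_zero fun i hi => by rw [hS i hi, norm_zero, Real.zero_rpow hs]

lemma powSum_le_card_mul (hs : 0 < s) (hS : ∀ i ∉ S, u i = 0) {K : ℝ}
    (hK : ∀ i ∈ S, ‖u i‖ ^ s ≤ K) : powSum s u ≤ S.card * K := by
  rw [powSum, tsum_eq_sum fun i hi => by rw [hS i hi, norm_zero, Real.zero_rpow hs.ne'],
    ← nsmul_eq_mul]
  exact S.sum_le_card_nsmul _ K hK

lemma PowSummable.card_mul_le_powSum (hu : PowSummable s u) {K : ℝ} (hK : ∀ i ∈ S, K ≤ ‖u i‖ ^ s) :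
    S.card * K ≤ powSum s u := by
  rw [← nsmul_eq_mul]
  exact (S.card_nsmul_le_sum _ K hK).trans (hu.sum_le_tsum S fun _ _ => by positivity)

end FiniteSupport

end PowSum

section BrezisLieb

variable {ι κ E : Type*} {l : Filter κ}

lemma norm_tsum_le_add_tsum_max [SeminormedAddCommGroup E] {g : ι → E} {a b : ι → ℝ}
    (ha : Summable a) (hb : Summable b) (hg : ∀ i, ‖g i‖ ≤ a i + b i) :
    ‖∑' i, g i‖ ≤ ∑' i, a i + ∑' i, max (‖g i‖ - a i) 0 := by
  have hmax : Summable fun i => max (‖g i‖ - a i) 0 :=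
    Summable.of_nonneg_of_le (fun _ => le_max_right _ _)
      (fun i => max_le (by linarith [hg i, le_abs_self (b i)]) (abs_nonneg (b i))) hb.abs
  rw [← ha.tsum_add hmax]
  exact tsum_of_norm_bounded (ha.add hmax).hasSum
    fun i => by linarith [le_max_left (‖g i‖ - a i) 0]

lemma tendsto_tsum_max_norm_sub_zero [SeminormedAddCommGroup E] {g : κ → ι → E} {a : κ → ι → ℝ}
    {b : ι → ℝ} (hg : ∀ i, Tendsto (g · i) l (𝓝 0)) (ha : ∀ k i, 0 ≤ a k i) (hb : Summable b)
    (hgab : ∀ k i, ‖g k i‖ ≤ a k i + b i) :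
    Tendsto (fun k => ∑' i, max (‖g k i‖ - a k i) 0) l (𝓝 0) := by
  have hlim : Tendsto (fun k => ∑' i, max (‖g k i‖ - a k i) 0) l (𝓝 (∑' _ : ι, 0)) := by
    refine tendsto_tsum_of_dominated_convergence hb.abs (fun i => ?_)
      (Eventually.of_forall fun k i => ?_)
    · exact squeeze_zero (fun _ => le_max_right _ _)
        (fun k => max_le (sub_le_self _ (ha k i)) (norm_nonneg _))
        (tendsto_zero_iff_norm_tendsto_zero.1 (hg i))
    · rw [Real.norm_of_nonneg (le_max_right _ _)]
      exact max_le (by linarith [hgab k i, le_abs_self (b i)]) (abs_nonneg _)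
  rwa [tsum_zero] at hlim

lemma tendsto_tsum_zero_of_norm_le_add [SeminormedAddCommGroup E] {g : κ → ι → E}
    {a : κ → ι → ℝ} {b : ι → ℝ} {A : ℝ} (hg : ∀ i, Tendsto (g · i) l (𝓝 0))
    (ha₀ : ∀ k i, 0 ≤ a k i) (ha : ∀ k, Summable (a k)) (hA : ∀ k, ∑' i, a k i ≤ A)
    (hb : Summable b)
    (hgab : ∀ ε : ℝ, 0 < ε → ∃ C : ℝ, ∀ k i, ‖g k i‖ ≤ ε * a k i + C * b i) :
    Tendsto (fun k => ∑' i, g k i) l (𝓝 0) := by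
  refine NormedAddGroup.tendsto_nhds_zero.2 fun η hη => ?_
  obtain ⟨ε, hε, hεA⟩ : ∃ ε > 0, ε * A < η / 2 :=
    exists_pos_mul_lt (half_pos hη) A |>.imp fun ε h => ⟨h.1, mul_comm A ε ▸ h.2⟩
  obtain ⟨C, hC⟩ := hgab ε hε
  have hεa₀ : ∀ k i, 0 ≤ ε * a k i := fun k i => mul_nonneg hε.le (ha₀ k i)
  filter_upwards [(tendsto_tsum_max_norm_sub_zero hg hεa₀ (hb.mul_left C) hC).eventually
    (gt_mem_nhds (half_pos hη))] with k hk
  calc ‖∑' i, g k i‖ ≤ ∑' i, ε * a k i + ∑' i, max (‖g k i‖ - ε * a k i) 0 :=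
        norm_tsum_le_add_tsum_max ((ha k).mul_left ε) (hb.mul_left C) (hC k)
    _ ≤ ε * A + ∑' i, max (‖g k i‖ - ε * a k i) 0 := by
        rw [tsum_mul_left]
        gcongr
        exact hA k
    _ < η := by linarith

variable [SeminormedAddCommGroup E] {s A : ℝ} {f : κ → ι → E} {g : ι → E}

lemma PowSummable.of_tendsto [l.NeBot] (hs : 0 ≤ s) (hf : ∀ k, PowSummable s (f k))
    (hA : ∀ k, powSum s (f k) ≤ A) (hfg : ∀ i, Tendsto (f · i) l (𝓝 (g i))) :
    PowSummable s g :=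
  summable_of_sum_le (fun _ => by positivity) fun S =>
    le_of_tendsto (tendsto_finsetSum S fun i _ => (hfg i).norm.rpow_const (Or.inr hs))
      (Eventually.of_forall fun k =>
        ((hf k).sum_le_tsum S fun _ _ => by positivity).trans (hA k))

lemma tendsto_powSum_sub_powSum_sub (hs : 1 ≤ s) (hf : ∀ k, PowSummable s (f k))
    (hA : ∀ k, powSum s (f k) ≤ A) (hg : PowSummable s g)
    (hfg : ∀ i, Tendsto (f · i) l (𝓝 (g i))) :
    Tendsto (fun k => powSum s (f k) - powSum s (f k - g)) l (𝓝 (powSum s g)) := by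
  have hs₀ : 0 < s := zero_lt_one.trans_le hs
  have hdefect : Tendsto (fun k => ∑' i, (‖f k i‖ ^ s - ‖(f k - g) i‖ ^ s - ‖g i‖ ^ s)) l
      (𝓝 0) := by
    refine tendsto_tsum_zero_of_norm_le_add (a := fun k i => ‖(f k - g) i‖ ^ s)
      (b := fun i => ‖g i‖ ^ s) (A := 2 ^ (s - 1) * (A + powSum s g)) (fun i => ?_)
      (fun _ _ => by positivity) (fun k => (hf k).sub hs hg) (fun k => ?_) hg fun ε hε => ?_
    · simpa [Real.zero_rpow hs₀.ne'] using
        (((hfg i).norm.rpow_const (Or.inr hs₀.le)).sub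
          (((hfg i).sub_const (g i)).norm.rpow_const (Or.inr hs₀.le))).sub_const (‖g i‖ ^ s)
    · refine ((hf k).powSum_sub_le hs hg).trans ?_
      gcongr
      exact hA k
    · obtain ⟨C, -, hC⟩ := exists_abs_rpow_norm_add_sub_le (E := E) hs hε
      refine ⟨C + 1, fun k i => ?_⟩
      have hsplit := hC ((f k - g) i) (g i)
      rw [Pi.sub_apply, sub_add_cancel] at hsplit
      have hnonneg : 0 ≤ ‖g i‖ ^ s := by positivity
      rw [Real.norm_eq_abs, Pi.sub_apply]
      linarith [abs_sub (‖f k i‖ ^ s - ‖f k i - g i‖ ^ s) (‖g i‖ ^ s), abs_of_nonneg hnonneg]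
  have hsub : ∀ k, ∑' i, (‖f k i‖ ^ s - ‖(f k - g) i‖ ^ s - ‖g i‖ ^ s) =
      powSum s (f k) - powSum s (f k - g) - powSum s g := fun k => by
    rw [(Summable.sub (hf k) ((hf k).sub hs hg)).tsum_sub hg,
      Summable.tsum_sub (hf k) ((hf k).sub hs hg)]
    rfl
  simpa only [hsub, sub_add_cancel, zero_add] using hdefect.add_const (powSum s g)

end BrezisLieb

section DirichletForm

variable {G κ E : Type*} [AddGroup G] [SeminormedAddCommGroup E] {v : κ → G} {w : κ → ℝ}
  {u : G → E} {s : ℝ}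

/-- The increment `x ↦ u x - u (x - a)` of `u` along the jump `a`. -/
def increment (a : G) (u : G → E) : G → E := u - u ∘ Equiv.subRight a

/-- The Dirichlet form of the jump operator on `G` that jumps by `v k` at rate `w k`, i.e.
`u ↦ ½ ∑ₖ ∑ₓ wₖ ‖u x - u (x - vₖ)‖²`. -/
def dirichletForm (v : κ → G) (w : κ → ℝ) (u : G → E) : ℝ :=
  1 / 2 * ∑' k, w k * powSum 2 (increment (v k) u)

lemma increment_apply (a : G) (u : G → E) (x : G) : increment a u x = u x - u (x - a) := rfl

lemma increment_sub (a : G) (f g : G → E) :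
    increment a (f - g) = increment a f - increment a g := by
  ext x
  simp only [increment_apply, Pi.sub_apply]
  abel

lemma increment_smul [NormedSpace ℝ E] (a : G) (c : ℝ) (u : G → E) :
    increment a (c • u) = c • increment a u := by
  ext x
  simp only [increment_apply, Pi.smul_apply, smul_sub]

lemma increment_comp_addLeft (a b : G) (u : G → E) :
    increment a (u ∘ Equiv.addLeft b) = increment a u ∘ Equiv.addLeft b := by
  ext x
  simp only [increment_apply, Function.comp_apply, Equiv.coe_addLeft, add_sub_assoc]

lemma powSummable_increment (hs : 1 ≤ s) (hu : PowSummable s u) (a : G) :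
    PowSummable s (increment a u) :=
  hu.sub hs ((powSummable_comp_equiv _).2 hu)

lemma powSum_increment_le (hu : PowSummable 2 u) (a : G) :
    powSum 2 (increment a u) ≤ 4 * powSum 2 u := by
  refine (hu.powSum_sub_le one_le_two ((powSummable_comp_equiv _).2 hu)).trans_eq ?_
  rw [powSum_comp_equiv, show (2 : ℝ) - 1 = 1 by norm_num, Real.rpow_one]
  ring

lemma summable_mul_powSum_increment (hw₀ : ∀ k, 0 ≤ w k) (hw : Summable w)
    (hu : PowSummable 2 u) : Summable fun k => w k * powSum 2 (increment (v k) u) :=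
  Summable.of_nonneg_of_le (fun k => mul_nonneg (hw₀ k) (powSum_nonneg _ _))
    (fun k => mul_le_mul_of_nonneg_left (powSum_increment_le hu (v k)) (hw₀ k))
    (hw.mul_right _)

lemma dirichletForm_nonneg (hw₀ : ∀ k, 0 ≤ w k) (u : G → E) : 0 ≤ dirichletForm v w u :=
  mul_nonneg one_half_pos.le (tsum_nonneg fun k => mul_nonneg (hw₀ k) (powSum_nonneg _ _))

lemma dirichletForm_smul [NormedSpace ℝ E] (v : κ → G) (w : κ → ℝ) (c : ℝ) (u : G → E) :
    dirichletForm v w (c • u) = |c| ^ (2 : ℝ) * dirichletForm v w u := by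
  simp only [dirichletForm, increment_smul, powSum_smul, mul_left_comm _ (|c| ^ (2 : ℝ)),
    tsum_mul_left]

lemma dirichletForm_comp_addLeft (v : κ → G) (w : κ → ℝ) (u : G → E) (a : G) :
    dirichletForm v w (u ∘ Equiv.addLeft a) = dirichletForm v w u := by
  simp only [dirichletForm, increment_comp_addLeft, powSum_comp_equiv]

lemma tendsto_dirichletForm_sub_dirichletForm_sub {ι : Type*} {l : Filter ι} {A : ℝ}
    {f : ι → G → E} {g : G → E} (hw₀ : ∀ k, 0 ≤ w k) (hw : Summable w)
    (hf : ∀ i, PowSummable 2 (f i)) (hA : ∀ i, powSum 2 (f i) ≤ A) (hg : PowSummable 2 g)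
    (hfg : ∀ x, Tendsto (f · x) l (𝓝 (g x))) :
    Tendsto (fun i => dirichletForm v w (f i) - dirichletForm v w (f i - g)) l
      (𝓝 (dirichletForm v w g)) := by
  have hfg₂ : ∀ i, PowSummable 2 (f i - g) := fun i => (hf i).sub one_le_two hg
  set B : ℝ := 2 ^ ((2 : ℝ) - 1) * (A + powSum 2 g) with hB
  have hfgB : ∀ i, powSum 2 (f i - g) ≤ B := fun i =>
    ((hf i).powSum_sub_le one_le_two hg).trans (by rw [hB]; gcongr; exact hA i)
  have hterm : ∀ k, Tendsto
      (fun i => w k * (powSum 2 (increment (v k) (f i)) - powSum 2 (increment (v k) (f i - g))))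
      l (𝓝 (w k * powSum 2 (increment (v k) g))) := fun k => by
    simp only [increment_sub]
    exact (tendsto_powSum_sub_powSum_sub one_le_two
      (fun i => powSummable_increment one_le_two (hf i) _)
      (fun i => (powSum_increment_le (hf i) _).trans
        (mul_le_mul_of_nonneg_left (hA i) zero_le_four))
      (powSummable_increment one_le_two hg _) fun x => (hfg x).sub (hfg (x - v k))).const_mul (w k)
  refine ((tendsto_tsum_of_dominated_convergence (hw.mul_right (4 * A + 4 * B)) hterm
    (Eventually.of_forall fun i k => ?_)).const_mul (1 / 2)).congr fun i => ?_
  · rw [norm_mul, Real.norm_of_nonneg (hw₀ k)]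
    refine mul_le_mul_of_nonneg_left ((norm_sub_le _ _).trans ?_) (hw₀ k)
    rw [Real.norm_of_nonneg (powSum_nonneg _ _), Real.norm_of_nonneg (powSum_nonneg _ _)]
    linarith [powSum_increment_le (hf i) (v k), powSum_increment_le (hfg₂ i) (v k), hA i,
      hfgB i]
  · simp only [mul_sub, dirichletForm]
    rw [(summable_mul_powSum_increment hw₀ hw (hf i)).tsum_sub
      (summable_mul_powSum_increment hw₀ hw (hfg₂ i)), mul_sub]

end DirichletForm

section IteratedSums

variable {G H E : Type*} [AddGroup H] [AddCommGroup G] [SeminormedAddCommGroup E] {w : G → ℝ}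
  {u : H × G → E}

lemma summable_mul_rpow_norm_increment (hw₀ : ∀ k, 0 ≤ w k) (hw : Summable w)
    (hu : PowSummable 2 u) :
    Summable fun x : G × H × G => w x.1 * ‖increment (0, x.1) u x.2‖ ^ (2 : ℝ) := by
  refine (summable_prod_of_nonneg fun x => mul_nonneg (hw₀ _) (by positivity)).2 ⟨fun k => ?_, ?_⟩
  · exact (powSummable_increment one_le_two hu (0, k)).mul_left (w k)
  · simp only [tsum_mul_left]
    exact summable_mul_powSum_increment hw₀ hw hu

lemma tsum_ite_eq_tsum_mul_rpow_norm_increment [DecidableEq G] (w : G → ℝ) (u : H × G → E)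
    (i : H) (n : G) :
    ∑' n', (if n' = n then 0 else w (n - n') * ‖u (i, n) - u (i, n')‖ ^ 2) =
      ∑' k, w k * ‖increment (0, k) u (i, n)‖ ^ (2 : ℝ) := by
  rw [← (Equiv.subLeft n).tsum_eq fun k => w k * ‖increment (0, k) u (i, n)‖ ^ (2 : ℝ)]
  refine tsum_congr fun n' => ?_
  rw [Equiv.subLeft_apply]
  split_ifs with h <;> simp [increment_apply, h]

lemma tsum_tsum_tsum_ite_eq_tsum_mul_powSum [DecidableEq G] (hw₀ : ∀ k, 0 ≤ w k)
    (hw : Summable w) (hu : PowSummable 2 u) :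
    ∑' (i : H) (n : G) (n' : G), (if n' = n then 0 else w (n - n') * ‖u (i, n) - u (i, n')‖ ^ 2) =
      ∑' k, w k * powSum 2 (increment (0, k) u) := by
  have hsum := summable_mul_rpow_norm_increment hw₀ hw hu
  have hprod : Summable fun z : H × G => ∑' k, w k * ‖increment (0, k) u z‖ ^ (2 : ℝ) :=
    hsum.prod_symm.prod
  simp only [tsum_ite_eq_tsum_mul_rpow_norm_increment, powSum, ← tsum_mul_left]
  rw [← hprod.tsum_prod]
  exact Summable.tsum_comm (f := fun k z => w k * ‖increment (0, k) u z‖ ^ (2 : ℝ)) hsum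

end IteratedSums

section Energy

variable {G κ E : Type*} [SeminormedAddCommGroup E] {p ν : ℝ} {u : G → E}

/-- The admissible states of mass `ν`: the sphere `∑ ‖u‖ ^ 2 = ν` of `ℓ²`. -/
def massSphere (G E : Type*) [SeminormedAddCommGroup E] (ν : ℝ) : Set (G → E) :=
  {u | PowSummable 2 u ∧ powSum 2 u = ν}

lemma sqrt_smul_mem_massSphere [NormedSpace ℝ E] {θ : ℝ} (hθ : 0 ≤ θ) (hu : PowSummable 2 u)
    (hν : θ * powSum 2 u = ν) :
    √θ • u ∈ massSphere G E ν :=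
  ⟨hu.smul _, by rw [powSum_smul, Real.rpow_two, sq_abs, Real.sq_sqrt hθ, hν]⟩

variable [AddGroup G] {v : κ → G} {w : κ → ℝ}

/-- The energy `½ ⟨Lu, u⟩ - (p + 1)⁻¹ ∑ ‖u‖ ^ (p + 1)` of the jump operator `L` with jumps `v` and
rates `w`. -/
def energy (v : κ → G) (w : κ → ℝ) (p : ℝ) (u : G → E) : ℝ :=
  1 / 2 * dirichletForm v w u - 1 / (p + 1) * powSum (p + 1) u

/-- The ground state energy `I_ν` of `E`-valued states. -/
def groundEnergy (E : Type*) [SeminormedAddCommGroup E] (v : κ → G) (w : κ → ℝ) (p ν : ℝ) : ℝ :=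
  sInf (energy v w p '' massSphere G E ν)

lemma energy_comp_addLeft (v : κ → G) (w : κ → ℝ) (p : ℝ) (u : G → E) (a : G) :
    energy v w p (u ∘ Equiv.addLeft a) = energy v w p u := by
  simp only [energy, dirichletForm_comp_addLeft, powSum_comp_equiv]

lemma comp_addLeft_mem_massSphere (hu : u ∈ massSphere G E ν) (a : G) :
    u ∘ Equiv.addLeft a ∈ massSphere G E ν :=
  ⟨(powSummable_comp_equiv _).2 hu.1, (powSum_comp_equiv _ _ _).trans hu.2⟩

lemma neg_le_energy (hw₀ : ∀ k, 0 ≤ w k) (hp : 1 ≤ p) (hu : PowSummable 2 u) {K : ℝ}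
    (hK : ∀ x, ‖u x‖ ≤ K) : -(1 / (p + 1) * (K ^ (p - 1) * powSum 2 u)) ≤ energy v w p u := by
  have hpot : powSum (p + 1) u ≤ K ^ (p - 1) * powSum 2 u := by
    simpa only [show p + 1 - 2 = p - 1 by ring] using
      hu.powSum_le_mul two_pos (by linarith : (2 : ℝ) ≤ p + 1) hK
  have hform := dirichletForm_nonneg (v := v) hw₀ u
  have hpot' : 1 / (p + 1) * powSum (p + 1) u ≤ 1 / (p + 1) * (K ^ (p - 1) * powSum 2 u) := by
    gcongr
  rw [energy]
  linarith

lemma bddBelow_energy_image_massSphere (hw₀ : ∀ k, 0 ≤ w k) (hp : 1 ≤ p) :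
    BddBelow (energy v w p '' massSphere G E ν) := by
  refine ⟨-(1 / (p + 1) * ((ν ^ (1 / 2 : ℝ)) ^ (p - 1) * ν)), ?_⟩
  rintro _ ⟨u, ⟨hu, rfl⟩, rfl⟩
  exact neg_le_energy hw₀ hp hu (hu.norm_le two_pos)

lemma groundEnergy_le_energy (hw₀ : ∀ k, 0 ≤ w k) (hp : 1 ≤ p) (hu : u ∈ massSphere G E ν) :
    groundEnergy E v w p ν ≤ energy v w p u :=
  csInf_le (bddBelow_energy_image_massSphere hw₀ hp) (Set.mem_image_of_mem _ hu)

section Scaling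

variable [NormedSpace ℝ E] {θ : ℝ}

lemma energy_sqrt_smul (v : κ → G) (w : κ → ℝ) (hθ : 0 < θ) (p : ℝ) (u : G → E) :
    energy v w p (√θ • u) = θ * (1 / 2 * dirichletForm v w u -
      θ ^ ((p - 1) / 2) * (1 / (p + 1) * powSum (p + 1) u)) := by
  have hpow : √θ ^ (p + 1) = θ * θ ^ ((p - 1) / 2) := by
    rw [Real.sqrt_eq_rpow, ← Real.rpow_mul hθ.le,
      show 1 / 2 * (p + 1) = 1 + (p - 1) / 2 by ring, Real.rpow_add hθ, Real.rpow_one]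
  rw [energy, dirichletForm_smul, powSum_smul, abs_of_nonneg (Real.sqrt_nonneg θ), Real.rpow_two,
    Real.sq_sqrt hθ.le, hpow]
  ring

lemma groundEnergy_add_le_energy (hw₀ : ∀ k, 0 ≤ w k) (hp : 1 ≤ p) (hν : 0 < ν)
    (hu : PowSummable 2 u) (hM : 0 < powSum 2 u) :
    powSum 2 u / ν * groundEnergy E v w p ν +
      ((ν / powSum 2 u) ^ ((p - 1) / 2) - 1) * (1 / (p + 1) * powSum (p + 1) u) ≤
        energy v w p u := by
  have hθ : 0 < ν / powSum 2 u := div_pos hν hM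
  have hle := groundEnergy_le_energy (v := v) hw₀ hp
    (sqrt_smul_mem_massSphere hθ.le hu (div_mul_cancel₀ ν hM.ne'))
  rw [energy_sqrt_smul v w hθ, ← inv_mul_le_iff₀ hθ, inv_div] at hle
  rw [energy]
  linarith

lemma groundEnergy_le_energy_of_powSum_le (hw₀ : ∀ k, 0 ≤ w k) (hp : 1 ≤ p) (hν : 0 < ν)
    (hu : PowSummable 2 u) (hM : powSum 2 u ≤ ν) :
    powSum 2 u / ν * groundEnergy E v w p ν ≤ energy v w p u := by
  rcases (powSum_nonneg 2 u).eq_or_lt with hM₀ | hM₀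
  · simpa [← hM₀] using neg_le_energy (v := v) hw₀ hp hu (hu.norm_le two_pos)
  · have hone : 1 ≤ (ν / powSum 2 u) ^ ((p - 1) / 2) :=
      Real.one_le_rpow ((one_le_div hM₀).2 hM) (by linarith)
    have hpot : 0 ≤ 1 / (p + 1) * powSum (p + 1) u :=
      mul_nonneg (by positivity) (powSum_nonneg _ _)
    linarith [groundEnergy_add_le_energy (v := v) hw₀ hp hν hu hM₀,
      mul_nonneg (sub_nonneg.2 hone) hpot]

lemma groundEnergy_lt_energy_of_powSum_lt (hw₀ : ∀ k, 0 ≤ w k) (hp : 1 < p) (hν : 0 < ν)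
    (hu : PowSummable 2 u) (hM : powSum 2 u < ν) {x : G} (hx : 0 < ‖u x‖) :
    powSum 2 u / ν * groundEnergy E v w p ν < energy v w p u := by
  have hM₀ : 0 < powSum 2 u := hu.powSum_pos hx
  have hone : 1 < (ν / powSum 2 u) ^ ((p - 1) / 2) :=
    Real.one_lt_rpow ((one_lt_div hM₀).2 hM) (by linarith)
  have hpot : 0 < 1 / (p + 1) * powSum (p + 1) u :=
    mul_pos (by positivity) ((hu.of_le two_pos (by linarith)).powSum_pos hx)
  linarith [groundEnergy_add_le_energy (v := v) hw₀ hp.le hν hu hM₀,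
    mul_pos (sub_pos.2 hone) hpot]

lemma exists_energy_neg_of_lt_powSum (hw₀ : ∀ k, 0 ≤ w k) (hp : 1 ≤ p) (hν : 0 < ν)
    (hu : PowSummable 2 u)
    (hGN : (p + 1) / 2 * ν ^ (-(p - 1) / 2) * powSum 2 u ^ ((p - 1) / 2) * dirichletForm v w u <
      powSum (p + 1) u) :
    ∃ q ∈ massSphere G E ν, energy v w p q < 0 := by
  have hform := dirichletForm_nonneg (v := v) hw₀ u
  have hM : 0 < powSum 2 u := hu.powSum_pos_of_powSum_pos two_pos (by linarith) <|
    hGN.trans_le' <| by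
      have := powSum_nonneg 2 u
      positivity
  have hθ : 0 < ν / powSum 2 u := div_pos hν hM
  refine ⟨_, sqrt_smul_mem_massSphere hθ.le hu (div_mul_cancel₀ ν hM.ne'), ?_⟩
  have hθpow : ν ^ (-(p - 1) / 2) * powSum 2 u ^ ((p - 1) / 2) =
      ((ν / powSum 2 u) ^ ((p - 1) / 2))⁻¹ := by
    rw [neg_div, Real.rpow_neg hν.le, Real.div_rpow hν.le hM.le, inv_div, inv_mul_eq_div]
  rw [mul_assoc ((p + 1) / 2), hθpow] at hGN
  rw [energy_sqrt_smul v w hθ]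
  refine mul_neg_of_pos_of_neg hθ (sub_neg.2 ?_)
  have hpow : 0 < (ν / powSum 2 u) ^ ((p - 1) / 2) := Real.rpow_pos_of_pos hθ _
  rw [mul_right_comm, ← div_eq_mul_inv, div_lt_iff₀ hpow] at hGN
  rw [mul_left_comm, one_div_mul_eq_div, one_div_mul_eq_div, lt_div_iff₀ (by linarith)]
  linarith

end Scaling

end Energy

section Minimizers

variable {G κ E : Type*} [SeminormedAddCommGroup E] [AddGroup G] {v : κ → G} {w : κ → ℝ}
  {p ν : ℝ} {q u : G → E}

lemma tendsto_energy_sub_energy_sub {ι : Type*} {l : Filter ι} {Q : ι → G → E}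
    (hw₀ : ∀ k, 0 ≤ w k) (hw : Summable w) (hp : 1 ≤ p) (hQ : ∀ i, Q i ∈ massSphere G E ν)
    (hq : PowSummable 2 q) (hQq : ∀ x, Tendsto (Q · x) l (𝓝 (q x))) :
    Tendsto (fun i => energy v w p (Q i) - energy v w p (Q i - q)) l (𝓝 (energy v w p q)) := by
  have hp₂ : 2 ≤ p + 1 := by linarith
  have hform := tendsto_dirichletForm_sub_dirichletForm_sub (v := v) hw₀ hw (fun i => (hQ i).1)
    (fun i => (hQ i).2.le) hq hQq
  have hpot := tendsto_powSum_sub_powSum_sub (s := p + 1)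
    (A := (ν ^ (1 / 2 : ℝ)) ^ (p + 1 - 2) * ν) (by linarith)
    (fun i => (hQ i).1.of_le two_pos hp₂)
    (fun i => (hQ i).2 ▸ (hQ i).1.powSum_le_mul two_pos hp₂ ((hQ i).1.norm_le two_pos))
    (hq.of_le two_pos hp₂) hQq
  refine ((hform.const_mul (1 / 2)).sub (hpot.const_mul (1 / (p + 1)))).congr fun i => ?_
  rw [energy, energy]
  ring

lemma exists_mem_massSphere_le_norm_zero (hw₀ : ∀ k, 0 ≤ w k) (hp : 1 ≤ p) {δ : ℝ}
    (hu : u ∈ massSphere G E ν)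
    (hδ : energy v w p u < -(1 / (p + 1) * (δ ^ (p - 1) * ν))) :
    ∃ u' ∈ massSphere G E ν, energy v w p u' = energy v w p u ∧ δ ≤ ‖u' 0‖ := by
  obtain ⟨x, hx⟩ : ∃ x, δ ≤ ‖u x‖ := by
    by_contra! hsmall
    have hlow := neg_le_energy (v := v) hw₀ hp hu.1 fun x => (hsmall x).le
    rw [hu.2] at hlow
    exact hδ.not_ge hlow
  exact ⟨_, comp_addLeft_mem_massSphere hu x, energy_comp_addLeft v w p u x, by simpa using hx⟩

lemma massSphere_nonempty_of_groundEnergy_neg (hI : groundEnergy E v w p ν < 0) :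
    (massSphere G E ν).Nonempty := by
  by_contra hempty
  rw [Set.not_nonempty_iff_eq_empty] at hempty
  simp [groundEnergy, hempty] at hI

-- Low energy forces a point where `‖u‖` is bounded below, and translating it to `0` excludes
-- vanishing of the minimizing sequence.
lemma exists_minimizing_seq (hw₀ : ∀ k, 0 ≤ w k) (hp : 1 < p) (hI : groundEnergy E v w p ν < 0) :
    ∃ (Q : ℕ → G → E) (δ : ℝ), 0 < δ ∧ (∀ i, Q i ∈ massSphere G E ν ∧ δ ≤ ‖Q i 0‖) ∧
      Tendsto (fun i => energy v w p (Q i)) atTop (𝓝 (groundEnergy E v w p ν)) := by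
  set I := groundEnergy E v w p ν
  obtain ⟨δ, hIδ, hδ⟩ : ∃ δ : ℝ, I < -(1 / (p + 1) * (δ ^ (p - 1) * ν)) ∧ 0 < δ := by
    have hlim : Tendsto (fun δ : ℝ => -(1 / (p + 1) * (δ ^ (p - 1) * ν))) (𝓝[>] 0) (𝓝 0) := by
      have hpow : Tendsto (fun δ : ℝ => δ ^ (p - 1)) (𝓝[>] 0) (𝓝 0) := by
        simpa [Real.zero_rpow (sub_pos.2 hp).ne'] using
          (Real.continuousAt_rpow_const 0 (p - 1) (Or.inr (by linarith))).tendsto.mono_left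
            nhdsWithin_le_nhds
      simpa using ((hpow.mul_const ν).const_mul (1 / (p + 1))).neg
    exact ((hlim.eventually (lt_mem_nhds hI)).and self_mem_nhdsWithin).exists
  obtain ⟨c, -, hIc, hc⟩ := exists_seq_strictAnti_tendsto I
  have hnear : ∀ i, ∃ u ∈ massSphere G E ν, δ ≤ ‖u 0‖ ∧ energy v w p u < c i := fun i => by
    obtain ⟨_, ⟨u, hu, rfl⟩, hu_lt⟩ := exists_lt_of_csInf_lt
      ((massSphere_nonempty_of_groundEnergy_neg hI).image _) (lt_min (hIc i) hIδ)
    obtain ⟨u', hu', hE, h0⟩ :=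
      exists_mem_massSphere_le_norm_zero hw₀ hp.le hu (hu_lt.trans_le (min_le_right _ _))
    exact ⟨u', hu', h0, hE ▸ hu_lt.trans_le (min_le_left _ _)⟩
  choose Q hQ hQδ hQc using hnear
  exact ⟨Q, δ, hδ, fun i => ⟨hQ i, hQδ i⟩, tendsto_of_tendsto_of_tendsto_of_le_of_le
    tendsto_const_nhds hc (fun i => groundEnergy_le_energy hw₀ hp.le (hQ i))
    fun i => (hQc i).le⟩

lemma exists_tendsto_ultrafilter_of_norm_le [ProperSpace E] {ι : Type*} (l : Ultrafilter ι)
    {f : ι → E} {A : ℝ} (hf : ∀ i, ‖f i‖ ≤ A) : ∃ y, Tendsto f l (𝓝 y) := by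
  obtain ⟨y, -, hy⟩ := (isCompact_closedBall (0 : E) A).ultrafilter_le_nhds (l.map f)
    (tendsto_principal.2 (Eventually.of_forall fun i => mem_closedBall_zero_iff.2 (hf i)))
  exact ⟨y, hy⟩

variable [NormedSpace ℝ E]

lemma energy_le_of_tendsto_groundEnergy {ι : Type*} {l : Filter ι} [l.NeBot] {Q : ι → G → E}
    (hw₀ : ∀ k, 0 ≤ w k) (hw : Summable w) (hp : 1 ≤ p) (hν : 0 < ν)
    (hQ : ∀ i, Q i ∈ massSphere G E ν)
    (hQI : Tendsto (fun i => energy v w p (Q i)) l (𝓝 (groundEnergy E v w p ν)))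
    (hq : PowSummable 2 q) (hq₀ : 0 < powSum 2 q) (hQq : ∀ x, Tendsto (Q · x) l (𝓝 (q x))) :
    powSum 2 q ≤ ν ∧ energy v w p q ≤ powSum 2 q / ν * groundEnergy E v w p ν := by
  set I := groundEnergy E v w p ν
  have hQq₂ : ∀ i, PowSummable 2 (Q i - q) := fun i => (hQ i).1.sub one_le_two hq
  have hmass : Tendsto (fun i => powSum 2 (Q i - q)) l (𝓝 (ν - powSum 2 q)) :=
    ((tendsto_powSum_sub_powSum_sub one_le_two (fun i => (hQ i).1) (fun i => (hQ i).2.le) hq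
      hQq).const_sub ν).congr fun i => by rw [(hQ i).2, sub_sub_cancel]
  have henergy : Tendsto (fun i => energy v w p (Q i - q)) l (𝓝 (I - energy v w p q)) :=
    (hQI.sub (tendsto_energy_sub_energy_sub hw₀ hw hp hQ hq hQq)).congr fun i =>
      sub_sub_cancel _ _
  have hremainder : (ν - powSum 2 q) / ν * I ≤ I - energy v w p q := by
    refine le_of_tendsto_of_tendsto ((hmass.div_const ν).mul_const I) henergy ?_
    filter_upwards [hmass.eventually (gt_mem_nhds (sub_lt_self ν hq₀))] with i hi
    exact groundEnergy_le_energy_of_powSum_le hw₀ hp hν (hQq₂ i) hi.le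
  refine ⟨sub_nonneg.1 (ge_of_tendsto hmass (Eventually.of_forall fun _ => powSum_nonneg _ _)), ?_⟩
  rw [sub_div, div_self hν.ne', sub_mul, one_mul] at hremainder
  linarith

theorem exists_energy_eq_groundEnergy [ProperSpace E] (hw₀ : ∀ k, 0 ≤ w k) (hw : Summable w)
    (hp : 1 < p) (hν : 0 < ν) (hI : groundEnergy E v w p ν < 0) :
    ∃ q ∈ massSphere G E ν, energy v w p q = groundEnergy E v w p ν := by
  obtain ⟨Q, δ, hδ, hQ, hQI⟩ := exists_minimizing_seq hw₀ hp hI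
  have hQν : ∀ i, Q i ∈ massSphere G E ν := fun i => (hQ i).1
  choose q hQq using fun x => exists_tendsto_ultrafilter_of_norm_le (hyperfilter ℕ)
    fun i => (hQν i).2 ▸ (hQν i).1.norm_le two_pos x
  have hq : PowSummable 2 q :=
    PowSummable.of_tendsto zero_le_two (fun i => (hQν i).1) (fun i => (hQν i).2.le) hQq
  have hq₀ : 0 < ‖q 0‖ :=
    hδ.trans_le (ge_of_tendsto (hQq 0).norm (Eventually.of_forall fun i => (hQ i).2))
  obtain ⟨hqν, hqI⟩ := energy_le_of_tendsto_groundEnergy hw₀ hw hp.le hν hQν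
    (hQI.mono_left Nat.hyperfilter_le_atTop) hq (hq.powSum_pos hq₀) hQq
  have hmass : powSum 2 q = ν := hqν.eq_of_not_lt fun hlt =>
    (groundEnergy_lt_energy_of_powSum_lt hw₀ hp hν hq hlt hq₀).not_ge hqI
  rw [hmass, div_self hν.ne', one_mul] at hqI
  exact ⟨q, ⟨hq, hmass⟩, hqI.antisymm (groundEnergy_le_energy hw₀ hp.le ⟨hq, hmass⟩)⟩

end Minimizers

section TentFunctions

variable {G κ E : Type*} [AddGroup G] {v : κ → G} {w : κ → ℝ}

open scoped Classical in
lemma dirichletForm_le_card_mul_tsum [SeminormedAddCommGroup E] {u : G → E} {S : Finset G}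
    {h : κ → ℝ} (hw₀ : ∀ k, 0 ≤ w k) (hS : ∀ x ∉ S, u x = 0)
    (hh : ∀ k x, ‖increment (v k) u x‖ ^ (2 : ℝ) ≤ h k) (hwh : Summable fun k => w k * h k) :
    dirichletForm v w u ≤ S.card * ∑' k, w k * h k := by
  have hincrement : ∀ k, powSum 2 (increment (v k) u) ≤ 2 * S.card * h k := fun k => by
    set T : Finset G := S ∪ S.map (Equiv.addRight (v k)).toEmbedding
    have hT : ∀ x ∉ T, increment (v k) u x = 0 := fun x hx => by
      obtain ⟨hx₁, hx₂⟩ := not_or.1 (mt Finset.mem_union.2 hx)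
      rw [increment_apply, hS x hx₁, hS (x - v k), sub_zero]
      exact fun hmem => hx₂ (Finset.mem_map.2 ⟨_, hmem, sub_add_cancel x (v k)⟩)
    have hcard : (T.card : ℝ) ≤ 2 * S.card := by
      have := Finset.card_union_le S (S.map (Equiv.addRight (v k)).toEmbedding)
      rw [Finset.card_map, ← two_mul] at this
      exact_mod_cast this
    have hh₀ : 0 ≤ h k := (by positivity : (0 : ℝ) ≤ _).trans (hh k 0)
    exact (powSum_le_card_mul two_pos hT fun x _ => hh k x).trans (by gcongr)
  have hterm : ∀ k, w k * powSum 2 (increment (v k) u) ≤ 2 * S.card * (w k * h k) := fun k =>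
    (mul_le_mul_of_nonneg_left (hincrement k) (hw₀ k)).trans_eq (mul_left_comm _ _ _)
  have hsum : Summable fun k => w k * powSum 2 (increment (v k) u) :=
    Summable.of_nonneg_of_le (fun k => mul_nonneg (hw₀ k) (powSum_nonneg _ _)) hterm
      (hwh.mul_left _)
  have hle := hsum.tsum_le_tsum hterm (hwh.mul_left _)
  rw [tsum_mul_left] at hle
  rw [dirichletForm]
  linarith

/-- The tent function `max (1 - ρ) 0` of a seminorm `ρ`, as a complex-valued trial state. -/
def tent (ρ : AddGroupSeminorm G) (x : G) : ℂ := (max (1 - ρ x) 0 : ℝ)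

variable {ρ : AddGroupSeminorm G} {x : G}

lemma norm_tent (ρ : AddGroupSeminorm G) (x : G) : ‖tent ρ x‖ = max (1 - ρ x) 0 := by
  rw [tent, Complex.norm_real, Real.norm_of_nonneg (le_max_right _ _)]

lemma norm_tent_le_one (ρ : AddGroupSeminorm G) (x : G) : ‖tent ρ x‖ ≤ 1 := by
  rw [norm_tent]
  exact max_le (sub_le_self _ (apply_nonneg ρ x)) zero_le_one

lemma tent_eq_zero (hx : 1 ≤ ρ x) : tent ρ x = 0 := by
  rw [tent, max_eq_right (sub_nonpos.2 hx), Complex.ofReal_zero]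

lemma norm_increment_tent (ρ : AddGroupSeminorm G) (a x : G) :
    ‖increment a (tent ρ) x‖ = |max (1 - ρ x) 0 - max (1 - ρ (x - a)) 0| := by
  rw [increment_apply, tent, tent, ← Complex.ofReal_sub, Complex.norm_real, Real.norm_eq_abs]

lemma norm_increment_tent_le_one (ρ : AddGroupSeminorm G) (a x : G) :
    ‖increment a (tent ρ) x‖ ≤ 1 := by
  have hmem : ∀ y, max (1 - ρ y) 0 ∈ Set.Icc (0 : ℝ) 1 := fun y =>
    ⟨le_max_right _ _, norm_tent ρ y ▸ norm_tent_le_one ρ y⟩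
  rw [norm_increment_tent]
  exact (abs_sub_le_of_le_of_le (hmem _).1 (hmem _).2 (hmem _).1 (hmem _).2).trans_eq
    (sub_zero 1)

lemma norm_increment_tent_le (ρ : AddGroupSeminorm G) (a x : G) :
    ‖increment a (tent ρ) x‖ ≤ ρ a := by
  rw [norm_increment_tent]
  refine (abs_max_sub_max_le_abs _ _ _).trans (abs_le.2 ⟨?_, ?_⟩)
  · have := map_add_le_add ρ (x - a) a
    rw [sub_add_cancel] at this
    linarith
  · linarith [map_sub_le_add ρ x a]

lemma rpow_norm_increment_tent_le {γ : ℝ} (hγ₀ : 0 < γ) (hγ₁ : γ ≤ 1) (ρ : AddGroupSeminorm G)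
    (a x : G) : ‖increment a (tent ρ) x‖ ^ (2 : ℝ) ≤ ρ a ^ (2 * γ) :=
  calc ‖increment a (tent ρ) x‖ ^ (2 : ℝ) ≤ ‖increment a (tent ρ) x‖ ^ (2 * γ) :=
        Real.rpow_le_rpow_of_exponent_ge' (norm_nonneg _) (norm_increment_tent_le_one ρ a x)
          (by positivity) (by linarith)
    _ ≤ ρ a ^ (2 * γ) :=
        Real.rpow_le_rpow (norm_nonneg _) (norm_increment_tent_le ρ a x) (by positivity)

lemma lt_powSum_tent {S T : Finset G} {γ : κ → ℝ} {r s c : ℝ} (hw₀ : ∀ k, 0 ≤ w k)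
    (hr : 0 ≤ r) (hs : 0 < s) (hc : 0 ≤ c) (hS : ∀ x ∉ S, 1 ≤ ρ x) (hT : ∀ x ∈ T, ρ x ≤ 1 / 2)
    (hγ : ∀ k, 0 < γ k ∧ γ k ≤ 1) (hwρ : Summable fun k => w k * ρ (v k) ^ (2 * γ k))
    (hcST : c * S.card ^ r * (S.card * ∑' k, w k * ρ (v k) ^ (2 * γ k)) <
      T.card * (1 / 2) ^ s) :
    PowSummable 2 (tent ρ) ∧
      c * powSum 2 (tent ρ) ^ r * dirichletForm v w (tent ρ) < powSum s (tent ρ) := by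
  have hsupp : ∀ x ∉ S, tent ρ x = 0 := fun x hx => tent_eq_zero (hS x hx)
  have hmass : powSum 2 (tent ρ) ≤ S.card := by
    simpa using powSum_le_card_mul two_pos hsupp fun x _ =>
      Real.rpow_le_one (norm_nonneg _) (norm_tent_le_one ρ x) zero_le_two
  have hform : dirichletForm v w (tent ρ) ≤ S.card * ∑' k, w k * ρ (v k) ^ (2 * γ k) :=
    dirichletForm_le_card_mul_tsum hw₀ hsupp
      (fun k => rpow_norm_increment_tent_le (hγ k).1 (hγ k).2 ρ (v k)) hwρ
  have hpot : T.card * (1 / 2) ^ s ≤ powSum s (tent ρ) :=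
    (powSummable_of_support_subset hs.ne' hsupp).card_mul_le_powSum fun x hx => by
      gcongr
      rw [norm_tent]
      exact le_max_of_le_left (by linarith [hT x hx])
  refine ⟨powSummable_of_support_subset two_ne_zero hsupp, lt_of_le_of_lt ?_
    (hcST.trans_le hpot)⟩
  have hmass₀ := powSum_nonneg 2 (tent ρ)
  have hform₀ := dirichletForm_nonneg (v := v) hw₀ (tent ρ)
  gcongr

end TentFunctions

section SquareLattice

variable {γ₁ γ₂ : ℝ} {J1 J2 : ℕ → ℝ}

/-- The jumps of `ℤ²` parallel to the axes, indexed by signed length. The zero jumps are included: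
they have no increment, so the rate given to them does not matter. -/
def axisStep : ℤ ⊕ ℤ → ℤ × ℤ := Sum.elim (fun k => (k, 0)) fun k => (0, k)

/-- The rates of the jumps `axisStep`: a jump of length `k` has rate `J1 |k|` in the first
direction and `J2 |k|` in the second. -/
def axisRate (J1 J2 : ℕ → ℝ) : ℤ ⊕ ℤ → ℝ :=
  Sum.elim (fun k => J1 k.natAbs) fun k => J2 k.natAbs

/-- The `2γ`-th moment of the jump rates `J`, summed over signed lengths. -/
def jumpMoment (J : ℕ → ℝ) (γ : ℝ) : ℝ := ∑' k : ℤ, J k.natAbs * |(k : ℝ)| ^ (2 * γ)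

lemma axisRate_nonneg (hJ1 : ∀ k, 0 ≤ J1 k) (hJ2 : ∀ k, 0 ≤ J2 k) (k : ℤ ⊕ ℤ) :
    0 ≤ axisRate J1 J2 k := by
  rcases k with k | k
  exacts [hJ1 _, hJ2 _]

lemma summable_natAbs {f : ℕ → ℝ} (hf : Summable f) : Summable fun k : ℤ => f k.natAbs :=
  summable_int_iff_summable_nat_and_neg.2 ⟨by simpa using hf, by simpa using hf⟩

lemma summable_axisRate (hJ1 : Summable J1) (hJ2 : Summable J2) : Summable (axisRate J1 J2) :=
  Summable.sum _ (summable_natAbs hJ1) (summable_natAbs hJ2)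

lemma hasSum_jumpMoment {J : ℕ → ℝ} {γ : ℝ}
    (hJ : Summable fun k : ℕ => (k : ℝ) ^ (2 * γ) * J k) :
    HasSum (fun k : ℤ => J k.natAbs * |(k : ℝ)| ^ (2 * γ)) (jumpMoment J γ) :=
  ((summable_natAbs hJ).congr fun k => by
    rw [mul_comm, Nat.cast_natAbs, Int.cast_abs]).hasSum

lemma jumpMoment_nonneg {J : ℕ → ℝ} (hJ : ∀ k, 0 ≤ J k) (γ : ℝ) : 0 ≤ jumpMoment J γ :=
  tsum_nonneg fun _ => mul_nonneg (hJ _) (by positivity)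

/-- The anisotropic seminorm `|n| / N₁ + |m| / N₂` on `ℤ²`. -/
def boxSeminorm (N₁ N₂ : ℕ) : AddGroupSeminorm (ℤ × ℤ) where
  toFun z := |(z.1 : ℝ)| / N₁ + |(z.2 : ℝ)| / N₂
  map_zero' := by simp
  add_le' x y := by
    simp only [Prod.fst_add, Prod.snd_add, Int.cast_add]
    calc _ ≤ (|(x.1 : ℝ)| + |(y.1 : ℝ)|) / N₁ + (|(x.2 : ℝ)| + |(y.2 : ℝ)|) / N₂ := by
          gcongr <;> exact abs_add_le _ _
      _ = _ := by ring
  neg' x := by simp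

lemma boxSeminorm_apply (N₁ N₂ : ℕ) (z : ℤ × ℤ) :
    boxSeminorm N₁ N₂ z = |(z.1 : ℝ)| / N₁ + |(z.2 : ℝ)| / N₂ := rfl

lemma hasSum_axisRate_mul_boxSeminorm
    (hJ1 : Summable fun k : ℕ => (k : ℝ) ^ (2 * γ₁) * J1 k)
    (hJ2 : Summable fun k : ℕ => (k : ℝ) ^ (2 * γ₂) * J2 k) (N₁ N₂ : ℕ) :
    HasSum (fun k => axisRate J1 J2 k *
        boxSeminorm N₁ N₂ (axisStep k) ^ (2 * Sum.elim (fun _ => γ₁) (fun _ => γ₂) k))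
      ((N₁ : ℝ) ^ (-(2 * γ₁)) * jumpMoment J1 γ₁ +
        (N₂ : ℝ) ^ (-(2 * γ₂)) * jumpMoment J2 γ₂) := by
  have hscale : ∀ (J : ℕ → ℝ) (γ : ℝ) (N : ℕ) (k : ℤ), (N : ℝ) ^ (-(2 * γ)) *
      (J k.natAbs * |(k : ℝ)| ^ (2 * γ)) = J k.natAbs * (|(k : ℝ)| / N) ^ (2 * γ) := by
    intro J γ N k
    rw [Real.div_rpow (abs_nonneg _) N.cast_nonneg, Real.rpow_neg N.cast_nonneg]
    ring
  exact HasSum.sum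
    (by simpa [Function.comp_def, axisRate, axisStep, boxSeminorm_apply, hscale] using
      (hasSum_jumpMoment hJ1).mul_left ((N₁ : ℝ) ^ (-(2 * γ₁))))
    (by simpa [Function.comp_def, axisRate, axisStep, boxSeminorm_apply, hscale] using
      (hasSum_jumpMoment hJ2).mul_left ((N₂ : ℝ) ^ (-(2 * γ₂))))

/-- The box `[-L₁, L₁] × [-L₂, L₂]` in `ℤ²`. -/
def centeredBox (L₁ L₂ : ℕ) : Finset (ℤ × ℤ) :=
  Finset.Icc (-(L₁ : ℤ)) L₁ ×ˢ Finset.Icc (-(L₂ : ℤ)) L₂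

variable {L₁ L₂ : ℕ}

lemma mem_centeredBox {z : ℤ × ℤ} :
    z ∈ centeredBox L₁ L₂ ↔ |(z.1 : ℝ)| ≤ L₁ ∧ |(z.2 : ℝ)| ≤ L₂ := by
  simp only [centeredBox, Finset.mem_product, Finset.mem_Icc, ← abs_le]
  norm_cast

lemma card_centeredBox (L₁ L₂ : ℕ) :
    ((centeredBox L₁ L₂).card : ℝ) = (2 * L₁ + 1) * (2 * L₂ + 1) := by
  have hcard : ∀ L : ℕ, ((Finset.Icc (-(L : ℤ)) L).card : ℝ) = 2 * L + 1 := fun L => by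
    rw [Int.card_Icc, show ((L : ℤ) + 1 - -L).toNat = 2 * L + 1 by lia]
    push_cast
    ring
  rw [centeredBox, Finset.card_product, Nat.cast_mul, hcard, hcard]

lemma one_le_boxSeminorm_of_notMem (hL₁ : 0 < L₁) (hL₂ : 0 < L₂) {z : ℤ × ℤ}
    (hz : z ∉ centeredBox L₁ L₂) : 1 ≤ boxSeminorm L₁ L₂ z := by
  rw [boxSeminorm_apply]
  rcases not_and_or.1 (mt mem_centeredBox.2 hz) with h | h
  · exact le_add_of_le_of_nonneg ((one_le_div (by positivity)).2 (not_le.1 h).le) (by positivity)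
  · exact le_add_of_nonneg_of_le (by positivity) ((one_le_div (by positivity)).2 (not_le.1 h).le)

lemma boxSeminorm_le_half_of_mem (hL₁ : 0 < L₁) (hL₂ : 0 < L₂) {z : ℤ × ℤ}
    (hz : z ∈ centeredBox L₁ L₂) : boxSeminorm (4 * L₁) (4 * L₂) z ≤ 1 / 2 := by
  obtain ⟨h₁, h₂⟩ := mem_centeredBox.1 hz
  have h₁' : |(z.1 : ℝ)| / (4 * L₁) ≤ 1 / 4 := by
    rw [div_le_iff₀ (by positivity)]
    linarith
  have h₂' : |(z.2 : ℝ)| / (4 * L₂) ≤ 1 / 4 := by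
    rw [div_le_iff₀ (by positivity)]
    linarith
  rw [boxSeminorm_apply]
  push_cast
  linarith

/-- The half-width `⌈R ^ (1 / γ)⌉` of a box for jumps with finite `2γ`-th moment. -/
def boxWidth (γ R : ℝ) : ℕ := ⌈R ^ (1 / γ)⌉₊

section BoxWidth

variable {γ R : ℝ}

lemma boxWidth_pos (hR : 0 < R) : 0 < boxWidth γ R := Nat.ceil_pos.2 (Real.rpow_pos_of_pos hR _)

lemma boxWidth_le (hγ : 0 < γ) (hR : 1 ≤ R) : (boxWidth γ R : ℝ) ≤ 2 * R ^ (1 / γ) := by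
  refine Nat.ceil_le_two_mul ?_
  linarith [Real.one_le_rpow hR (one_div_pos.2 hγ).le]

lemma four_mul_boxWidth_rpow_le (hγ : 0 < γ) (hR : 0 < R) :
    ((4 * boxWidth γ R : ℕ) : ℝ) ^ (-(2 * γ)) ≤ R ^ (-2 : ℝ) := by
  have hle : R ^ (1 / γ) ≤ ((4 * boxWidth γ R : ℕ) : ℝ) := by
    have := Nat.le_ceil (R ^ (1 / γ))
    push_cast [boxWidth]
    linarith [Real.rpow_nonneg hR.le (1 / γ)]
  calc _ ≤ (R ^ (1 / γ)) ^ (-(2 * γ)) :=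
        Real.rpow_le_rpow_of_nonpos (by positivity) hle (by linarith)
    _ = R ^ (-2 : ℝ) := by
        rw [← Real.rpow_mul hR.le]
        congr 1
        field_simp

lemma card_centeredBox_boxWidth_le (hγ₁ : 0 < γ₁) (hγ₂ : 0 < γ₂) (hR : 1 ≤ R) :
    ((centeredBox (4 * boxWidth γ₁ R) (4 * boxWidth γ₂ R)).card : ℝ) ≤
      324 * R ^ (1 / γ₁ + 1 / γ₂) := by
  have hR₀ : 0 < R := one_pos.trans_le hR
  have h₁ : (1 : ℝ) ≤ boxWidth γ₁ R := by exact_mod_cast boxWidth_pos hR₀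
  have h₂ : (1 : ℝ) ≤ boxWidth γ₂ R := by exact_mod_cast boxWidth_pos hR₀
  rw [card_centeredBox]
  push_cast
  calc (2 * (4 * boxWidth γ₁ R) + 1) * (2 * (4 * boxWidth γ₂ R) + 1)
      ≤ (9 * boxWidth γ₁ R : ℝ) * (9 * boxWidth γ₂ R) := by gcongr <;> linarith
    _ ≤ (9 * (2 * R ^ (1 / γ₁))) * (9 * (2 * R ^ (1 / γ₂))) := by
        gcongr
        exacts [boxWidth_le hγ₁ hR, boxWidth_le hγ₂ hR]
    _ = 324 * R ^ (1 / γ₁ + 1 / γ₂) := by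
        rw [Real.rpow_add hR₀]
        ring

end BoxWidth

lemma card_centeredBox_four_mul_le (L₁ L₂ : ℕ) :
    ((centeredBox (4 * L₁) (4 * L₂)).card : ℝ) ≤ 16 * (centeredBox L₁ L₂).card := by
  rw [card_centeredBox, card_centeredBox]
  push_cast
  calc (2 * (4 * L₁) + 1 : ℝ) * (2 * (4 * L₂) + 1)
      ≤ (4 * (2 * L₁ + 1)) * (4 * (2 * L₂ + 1)) := by gcongr <;> linarith
    _ = 16 * ((2 * L₁ + 1) * (2 * L₂ + 1)) := by ring

lemma exists_one_le_mul_rpow_lt {a r : ℝ} (har : a * r < 2) (A : ℝ) {δ : ℝ} (hδ : 0 < δ) :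
    ∃ R : ℝ, 1 ≤ R ∧ A * ((324 * R ^ a) ^ r * R ^ (-2 : ℝ)) < δ := by
  have hlim : Tendsto (fun R : ℝ => A * 324 ^ r * R ^ (-(2 - a * r))) atTop (𝓝 0) := by
    simpa using (tendsto_rpow_neg_atTop (sub_pos.2 har)).const_mul (A * 324 ^ r)
  obtain ⟨R, hRδ, hR⟩ := ((hlim.eventually (gt_mem_nhds hδ)).and (eventually_ge_atTop 1)).exists
  have hR₀ : 0 < R := one_pos.trans_le hR
  refine ⟨R, hR, lt_of_eq_of_lt ?_ hRδ⟩
  rw [Real.mul_rpow (by norm_num) (by positivity), ← Real.rpow_mul hR₀.le,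
    show -(2 - a * r) = a * r + -2 by ring, Real.rpow_add hR₀]
  ring

lemma exists_lt_powSum_of_moments (hJ1₀ : ∀ k, 0 ≤ J1 k) (hJ2₀ : ∀ k, 0 ≤ J2 k)
    (hγ₁ : 0 < γ₁) (hγ₁' : γ₁ ≤ 1) (hγ₂ : 0 < γ₂) (hγ₂' : γ₂ ≤ 1)
    (hJ1 : Summable fun k : ℕ => (k : ℝ) ^ (2 * γ₁) * J1 k)
    (hJ2 : Summable fun k : ℕ => (k : ℝ) ^ (2 * γ₂) * J2 k) {r s c : ℝ} (hr : 0 ≤ r)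
    (hs : 0 < s) (hc : 0 ≤ c) (hγr : (1 / γ₁ + 1 / γ₂) * r < 2) :
    ∃ u : ℤ × ℤ → ℂ, PowSummable 2 u ∧
      c * powSum 2 u ^ r * dirichletForm axisStep (axisRate J1 J2) u < powSum s u := by
  set K : ℝ := jumpMoment J1 γ₁ + jumpMoment J2 γ₂ with hK
  have hK₁ := jumpMoment_nonneg hJ1₀ γ₁
  have hK₂ := jumpMoment_nonneg hJ2₀ γ₂
  obtain ⟨R, hR, hRs⟩ := exists_one_le_mul_rpow_lt hγr (16 * c * K)
    (by positivity : (0 : ℝ) < (1 / 2) ^ s)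
  have hR₀ : 0 < R := one_pos.trans_le hR
  have hL₁ : 0 < boxWidth γ₁ R := boxWidth_pos hR₀
  have hL₂ : 0 < boxWidth γ₂ R := boxWidth_pos hR₀
  set S := centeredBox (4 * boxWidth γ₁ R) (4 * boxWidth γ₂ R)
  set T := centeredBox (boxWidth γ₁ R) (boxWidth γ₂ R) with hT
  have hTpos : (0 : ℝ) < T.card := by
    rw [hT, card_centeredBox]
    positivity
  have hmoment := hasSum_axisRate_mul_boxSeminorm hJ1 hJ2 (4 * boxWidth γ₁ R) (4 * boxWidth γ₂ R)
  have hmoment_le : ((4 * boxWidth γ₁ R : ℕ) : ℝ) ^ (-(2 * γ₁)) * jumpMoment J1 γ₁ +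
      ((4 * boxWidth γ₂ R : ℕ) : ℝ) ^ (-(2 * γ₂)) * jumpMoment J2 γ₂ ≤ R ^ (-2 : ℝ) * K := by
    rw [hK, mul_add]
    gcongr
    exacts [four_mul_boxWidth_rpow_le hγ₁ hR₀, four_mul_boxWidth_rpow_le hγ₂ hR₀]
  refine ⟨_, lt_powSum_tent (axisRate_nonneg hJ1₀ hJ2₀) hr hs hc
    (fun _ => one_le_boxSeminorm_of_notMem (by positivity) (by positivity))
    (fun _ => boxSeminorm_le_half_of_mem hL₁ hL₂)
    (by rintro (k | k); exacts [⟨hγ₁, hγ₁'⟩, ⟨hγ₂, hγ₂'⟩]) hmoment.summable ?_⟩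
  rw [hmoment.tsum_eq]
  calc _ ≤ c * (324 * R ^ (1 / γ₁ + 1 / γ₂)) ^ r * (16 * T.card * (R ^ (-2 : ℝ) * K)) := by
        gcongr
        exacts [card_centeredBox_boxWidth_le hγ₁ hγ₂ hR, card_centeredBox_four_mul_le _ _]
    _ = T.card * (16 * c * K * ((324 * R ^ (1 / γ₁ + 1 / γ₂)) ^ r * R ^ (-2 : ℝ))) := by ring
    _ < T.card * (1 / 2) ^ s := by gcongr

end SquareLattice

section Encoding

variable {J1 J2 : ℕ → ℝ} {u : ℤ × ℤ → ℂ}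

lemma memL2two_iff : MemL2two u ↔ PowSummable 2 u := by
  simp only [MemL2two, PowSummable, Real.rpow_two]

lemma mass2_eq_powSum (u : ℤ × ℤ → ℂ) : mass2 u = powSum 2 u := by
  simp only [mass2, powSum, Real.rpow_two]

lemma pairing2_eq_dirichletForm (hJ1₀ : ∀ k, 0 ≤ J1 k) (hJ2₀ : ∀ k, 0 ≤ J2 k) (hJ1 : Summable J1)
    (hJ2 : Summable J2) (hu : PowSummable 2 u) :
    pairing2 J1 J2 u = dirichletForm axisStep (axisRate J1 J2) u := by
  set swap := Equiv.prodComm ℤ ℤ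
  have hswap : ∀ k : ℤ, powSum 2 (increment (0, k) (u ∘ swap)) = powSum 2 (increment (k, 0) u) :=
    fun k => powSum_comp_equiv 2 (increment (k, 0) u) swap
  have h₁ := tsum_tsum_tsum_ite_eq_tsum_mul_powSum (fun k => hJ1₀ k.natAbs)
    (summable_natAbs hJ1) ((powSummable_comp_equiv swap).2 hu)
  have h₂ := tsum_tsum_tsum_ite_eq_tsum_mul_powSum (fun k => hJ2₀ k.natAbs)
    (summable_natAbs hJ2) hu
  simp only [hswap] at h₁
  have hsum := summable_mul_powSum_increment (v := axisStep) (axisRate_nonneg hJ1₀ hJ2₀)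
    (summable_axisRate hJ1 hJ2) hu
  have hsplit := (hsum.comp_injective Sum.inl_injective).tsum_sum
    (hsum.comp_injective Sum.inr_injective)
  rw [dirichletForm, hsplit, mul_add, pairing2]
  exact congrArg₂ (1 / 2 * · + 1 / 2 * ·) h₁ h₂

lemma energy2_eq_energy (hJ1₀ : ∀ k, 0 ≤ J1 k) (hJ2₀ : ∀ k, 0 ≤ J2 k) (hJ1 : Summable J1)
    (hJ2 : Summable J2) (p : ℝ) (hu : PowSummable 2 u) :
    energy2 J1 J2 p u = energy axisStep (axisRate J1 J2) p u := by
  rw [energy2, energy, pairing2_eq_dirichletForm hJ1₀ hJ2₀ hJ1 hJ2 hu, ppot2, powSum]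

lemma Ifun2_eq_groundEnergy (hJ1₀ : ∀ k, 0 ≤ J1 k) (hJ2₀ : ∀ k, 0 ≤ J2 k) (hJ1 : Summable J1)
    (hJ2 : Summable J2) (p ν : ℝ) :
    Ifun2 J1 J2 p ν = groundEnergy ℂ axisStep (axisRate J1 J2) p ν := by
  refine congrArg sInf (Set.ext fun x => exists_congr fun q => ?_)
  rw [memL2two_iff, mass2_eq_powSum, ← and_assoc]
  exact and_congr_right fun hq => by rw [energy2_eq_energy hJ1₀ hJ2₀ hJ1 hJ2 p hq.1]

end Encoding

section Order

variable {J : ℕ → ℝ} {γ : ℝ}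

lemma summable_of_moment (hJ₀ : ∀ k, 0 ≤ J k) (hγ : 0 < γ)
    (hJ : Summable fun k : ℕ => (k : ℝ) ^ (2 * γ) * J k) : Summable J := by
  refine (summable_nat_add_iff 1).1 (Summable.of_nonneg_of_le (fun k => hJ₀ _) (fun k => ?_)
    ((summable_nat_add_iff 1).2 hJ))
  exact le_mul_of_one_le_left (hJ₀ _) (Real.one_le_rpow (by simp) (by positivity))

variable {α : ℝ≥0∞}

lemma alphaPrime_mem_Ioc (hα : 0 < α) : alphaPrime α ∈ Set.Ioc (0 : ℝ) 1 := by
  unfold alphaPrime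
  split_ifs with h
  · have hpos : 0 < α.toReal := ENNReal.toReal_pos hα.ne' h.ne_top
    have hle : α.toReal ≤ 2 := ENNReal.toReal_le_of_le_ofReal two_pos.le (by simpa using h.le)
    exact ⟨by linarith, by linarith⟩
  · exact ⟨one_pos, le_rfl⟩

lemma JOrder1.exists_tendsto (hJ : JOrder1 J α) (hγ : γ < alphaPrime α) :
    ∃ β A : ℝ, 2 * γ < β ∧ Tendsto (fun k : ℕ => (k : ℝ) ^ (1 + β) * J k) atTop (𝓝 A) := by
  unfold JOrder1 at hJ
  unfold alphaPrime at hγ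
  split_ifs at hJ with hα
  · simp only [hα, not_top_lt, if_false] at hγ
    exact ⟨2, 0, by linarith, hJ 2 two_pos⟩
  · obtain ⟨A, -, hA⟩ := hJ
    refine ⟨α.toReal, A, ?_, hA⟩
    split_ifs at hγ with h
    · linarith
    · have : 2 ≤ α.toReal := (ENNReal.ofReal_le_iff_le_toReal hα).1 (by simpa using h)
      linarith

lemma JOrder1.summable_moment (hJ : JOrder1 J α) (hγ : γ < alphaPrime α) :
    Summable fun k : ℕ => (k : ℝ) ^ (2 * γ) * J k := by
  obtain ⟨β, A, hβ, hA⟩ := hJ.exists_tendsto hγ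
  have hpow : Summable fun k : ℕ => (k : ℝ) ^ (-(1 + β - 2 * γ)) :=
    Real.summable_nat_rpow.2 (by linarith)
  refine summable_of_isBigO_nat hpow ?_
  have hmul := (Asymptotics.isBigO_refl (fun k : ℕ => (k : ℝ) ^ (-(1 + β - 2 * γ))) atTop).mul
    (hA.isBigO_one ℝ)
  simp only [mul_one] at hmul
  refine hmul.congr' ?_ EventuallyEq.rfl
  filter_upwards [eventually_gt_atTop 0] with k hk
  rw [← mul_assoc, ← Real.rpow_add (by positivity)]
  congr 2
  ring

end Order

section Subcritical

variable {p γ₁ γ₂ : ℝ} {J1 J2 : ℕ → ℝ}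

lemma inv_add_inv_mul_lt_two (hγ₁ : 0 < γ₁) (hγ₂ : 0 < γ₂)
    (hp : p < 1 + 4 * γ₁ * γ₂ / (γ₁ + γ₂)) : (1 / γ₁ + 1 / γ₂) * ((p - 1) / 2) < 2 := by
  have hlt : (p - 1) * (γ₁ + γ₂) < 4 * γ₁ * γ₂ := (lt_div_iff₀ (by positivity)).1 (by linarith)
  calc (1 / γ₁ + 1 / γ₂) * ((p - 1) / 2) = (p - 1) * (γ₁ + γ₂) / (2 * γ₁ * γ₂) := by
        field_simp
        ring
    _ < 2 := by
        rw [div_lt_iff₀ (by positivity)]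
        linarith

lemma exists_subcritical_lt {a b : ℝ} (ha : 0 < a) (hb : 0 < b) (hp : 1 < p)
    (hpab : p < 1 + 4 * a * b / (a + b)) :
    ∃ γ₁ γ₂ : ℝ, γ₁ ∈ Set.Ioo 0 a ∧ γ₂ ∈ Set.Ioo 0 b ∧ p < 1 + 4 * γ₁ * γ₂ / (γ₁ + γ₂) := by
  have hX : 0 < 4 * a * b / (a + b) := by positivity
  obtain ⟨t, ht, ht'⟩ := exists_between ((div_lt_one hX).2 (sub_left_lt_of_lt_add hpab))
  have ht₀ : 0 < t := (div_pos (sub_pos.2 hp) hX).trans ht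
  refine ⟨t * a, t * b, ⟨by positivity, mul_lt_of_lt_one_left ha ht'⟩,
    ⟨by positivity, mul_lt_of_lt_one_left hb ht'⟩, ?_⟩
  have hscale : 4 * (t * a) * (t * b) / (t * a + t * b) = t * (4 * a * b / (a + b)) := by
    field_simp
  rw [hscale]
  linarith [(div_lt_iff₀ hX).1 ht]

lemma exists_subcritical_moments {α₁ α₂ : ℝ≥0∞} (hα₁ : 0 < α₁) (hα₂ : 0 < α₂)
    (hJ1 : JOrder1 J1 α₁) (hJ2 : JOrder1 J2 α₂) (hp : 1 < p)
    (hpα : p < 1 + 4 * alphaPrime α₁ * alphaPrime α₂ / (alphaPrime α₁ + alphaPrime α₂)) :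
    ∃ γ₁ γ₂ : ℝ, γ₁ ∈ Set.Ioc 0 1 ∧ γ₂ ∈ Set.Ioc 0 1 ∧
      (Summable fun k : ℕ => (k : ℝ) ^ (2 * γ₁) * J1 k) ∧
      (Summable fun k : ℕ => (k : ℝ) ^ (2 * γ₂) * J2 k) ∧
      p < 1 + 4 * γ₁ * γ₂ / (γ₁ + γ₂) := by
  obtain ⟨ha₀, ha₁⟩ := alphaPrime_mem_Ioc hα₁
  obtain ⟨hb₀, hb₁⟩ := alphaPrime_mem_Ioc hα₂
  obtain ⟨γ₁, γ₂, ⟨hγ₁, hγa⟩, ⟨hγ₂, hγb⟩, hpγ⟩ := exists_subcritical_lt ha₀ hb₀ hp hpα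
  exact ⟨γ₁, γ₂, ⟨hγ₁, hγa.le.trans ha₁⟩, ⟨hγ₂, hγb.le.trans hb₁⟩, hJ1.summable_moment hγa,
    hJ2.summable_moment hγb, hpγ⟩

lemma nuZero2_eq_zero (h : ∀ ν, 0 < ν → ¬ GNineq2 J1 J2 p ν) : nuZero2 J1 J2 p = 0 := by
  have hempty : {ν : ℝ | 0 < ν ∧ GNineq2 J1 J2 p ν} = ∅ :=
    Set.eq_empty_of_forall_notMem fun ν hν => h ν hν.1 hν.2
  rw [nuZero2, hempty, insert_empty_eq, csSup_singleton]

end Subcritical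

theorem stmt12_general (p : ℝ) (hp : 1 < p) (J1 J2 : ℕ → ℝ)
    (hJ1pos : ∀ k, 0 ≤ J1 k) (hJ2pos : ∀ k, 0 ≤ J2 k) (γ₁ γ₂ : ℝ)
    (hγ₁ : γ₁ ∈ Set.Ioc 0 1) (hγ₂ : γ₂ ∈ Set.Ioc 0 1)
    (hJ1 : Summable fun k : ℕ => (k : ℝ) ^ (2 * γ₁) * J1 k)
    (hJ2 : Summable fun k : ℕ => (k : ℝ) ^ (2 * γ₂) * J2 k)
    (hpsub : p < 1 + 4 * γ₁ * γ₂ / (γ₁ + γ₂)) :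
    nuZero2 J1 J2 p = 0 ∧
      ∀ ν : ℝ, 0 < ν → Ifun2 J1 J2 p ν < 0 ∧
        ∃ q : ℤ × ℤ → ℂ, MemL2two q ∧ mass2 q = ν ∧
          energy2 J1 J2 p q = Ifun2 J1 J2 p ν := by
  have hs1 : Summable J1 := summable_of_moment hJ1pos hγ₁.1 hJ1
  have hs2 : Summable J2 := summable_of_moment hJ2pos hγ₂.1 hJ2
  have hw₀ := axisRate_nonneg hJ1pos hJ2pos
  have hGN : ∀ ν : ℝ, 0 < ν → ∃ u : ℤ × ℤ → ℂ, PowSummable 2 u ∧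
      (p + 1) / 2 * ν ^ (-(p - 1) / 2) * powSum 2 u ^ ((p - 1) / 2) *
        dirichletForm axisStep (axisRate J1 J2) u < powSum (p + 1) u := fun ν hν =>
    exists_lt_powSum_of_moments hJ1pos hJ2pos hγ₁.1 hγ₁.2 hγ₂.1 hγ₂.2 hJ1 hJ2 (by linarith)
      (by linarith) (by positivity) (inv_add_inv_mul_lt_two hγ₁.1 hγ₂.1 hpsub)
  refine ⟨nuZero2_eq_zero fun ν hν hineq => ?_, fun ν hν => ?_⟩ <;>
    obtain ⟨u, hu, hlt⟩ := hGN ν hν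
  · rw [← mass2_eq_powSum, ← pairing2_eq_dirichletForm hJ1pos hJ2pos hs1 hs2 hu] at hlt
    exact hlt.not_ge (hineq u (memL2two_iff.2 hu))
  · obtain ⟨q₀, hq₀, hneg⟩ := exists_energy_neg_of_lt_powSum hw₀ hp.le hν hu hlt
    have hI := (groundEnergy_le_energy hw₀ hp.le hq₀).trans_lt hneg
    obtain ⟨q, hq, hqI⟩ := exists_energy_eq_groundEnergy hw₀ (summable_axisRate hs1 hs2) hp hν hI
    rw [Ifun2_eq_groundEnergy hJ1pos hJ2pos hs1 hs2]
    exact ⟨hI, q, memL2two_iff.2 hq.1, (mass2_eq_powSum q).trans hq.2,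
      (energy2_eq_energy hJ1pos hJ2pos hs1 hs2 p hq.1).trans hqI⟩

theorem stmt12 (p : ℝ) (hp : 1 < p) (J1 J2 : ℕ → ℝ)
    (hJ1pos : ∀ k, 0 ≤ J1 k) (hJ2pos : ∀ k, 0 ≤ J2 k)
    (hJ1sum : Summable fun k : ℕ => J1 (k + 1)) (hJ2sum : Summable fun k : ℕ => J2 (k + 1))
    (hJ11 : 0 < J1 1) (hJ21 : 0 < J2 1)
    (α₁ α₂ : ℝ≥0∞) (hα₁ : 0 < α₁) (hα₂ : 0 < α₂) (hαord : α₂ ≤ α₁)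
    (horder1 : JOrder1 J1 α₁) (horder2 : JOrder1 J2 α₂)
    (hpsub : p < 1 + 4 * alphaPrime α₁ * alphaPrime α₂ / (alphaPrime α₁ + alphaPrime α₂)) :
    nuZero2 J1 J2 p = 0 ∧
      ∀ ν : ℝ, 0 < ν → Ifun2 J1 J2 p ν < 0 ∧
        ∃ q : ℤ × ℤ → ℂ, MemL2two q ∧ mass2 q = ν ∧
          energy2 J1 J2 p q = Ifun2 J1 J2 p ν := by
  obtain ⟨γ₁, γ₂, hγ₁, hγ₂, hm1, hm2, hpγ⟩ :=
    exists_subcritical_moments hα₁ hα₂ horder1 horder2 hp hpsub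
  exact stmt12_general p hp J1 J2 hJ1pos hJ2pos γ₁ γ₂ hγ₁ hγ₂ hm1 hm2 hpγ
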